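/- Maximality of the last token: let s be a nonempty string, and let w be a non-atomic canonical token that is a suffix of s with suc(w) = θ(s). Then w does not satisfy the Prefix Last-Token Condition with respect to s; in other words, the answer node θ(s) has no children satisfying the condition. -/

import Mathlib

/-!
Common BPE formalization preamble.

A token is a (nonempty) string over the alphabet `α`, modeled as `List α`.
A merge rule is a pair of tokens; a dictionary is an ordered list of rules
(earlier rules have strictly higher priority).
-/

namespace BPE

variable {α : Type*} [DecidableEq α]

/-- A token is a string over the alphabet (nonemptiness is imposed by hypotheses). -/
abbrev Token (α : Type*) := List α

/-- A merge rule is an ordered pair of tokens. -/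
abbrev Rule (α : Type*) := Token α × Token α

/-- A dictionary is an ordered list of merge rules; earlier = higher priority. -/
abbrev Dict (α : Type*) := List (Rule α)

/-- Apply a single merge rule to a token list, scanning left to right and replacing
each adjacent occurrence of `r.1` followed by `r.2` by the concatenated token,
resuming the scan after the newly formed token (no overlaps). -/
def applyRule (r : Rule α) : List (Token α) → List (Token α)
  | [] => []
  | [t] => [t]
  | t :: u :: rest =>
      if t = r.1 ∧ u = r.2 then (r.1 ++ r.2) :: applyRule r rest
      else t :: applyRule r (u :: rest)

/-- `φ₀(s)`: the list of single-character tokens of `s`. -/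
def phi0 (s : List α) : List (Token α) := s.map (fun c => [c])

/-- `φ_k(s)`: the token list after applying the first `k` rules of `D` to `s`. -/
def phiK (D : Dict α) (k : ℕ) (s : List α) : List (Token α) :=
  (D.take k).foldl (fun φ r => applyRule r φ) (phi0 s)

/-- The BPE tokenization `𝕋_D(s)`. -/
def tokenize (D : Dict α) (s : List α) : List (Token α) :=
  phiK D D.length s

/-- Detokenization `π`: concatenation of the tokens. -/
def detok (φ : List (Token α)) : List α := φ.flatten

/-- A dictionary is valid if all rule components are genuine (nonempty) tokens. -/
def ValidDict (D : Dict α) : Prop := ∀ r ∈ D, r.1 ≠ [] ∧ r.2 ≠ []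

/-- A token `t` is canonical if `𝕋_D(t) = [t]`. -/
def IsCanonical (D : Dict α) (t : Token α) : Prop := tokenize D t = [t]

/-- The last token `θ(s)`: last element of `𝕋_D(s)` (defaulting to `[]`). -/
def theta (D : Dict α) (s : List α) : Token α := (tokenize D s).getLastD []

/-- `j` (0-based) is the index of the canonical rule of `t`:
`φ_j(t)` has exactly two tokens and `φ_{j+1}(t) = [t]`. -/
def IsCanonicalRuleIdx (D : Dict α) (t : Token α) (j : ℕ) : Prop :=
  j < D.length ∧ (phiK D j t).length = 2 ∧ phiK D (j + 1) t = [t]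

open Classical in
/-- The (0-based) index of the canonical rule of `t` (junk value `0` if none exists). -/
noncomputable def canonIdx (D : Dict α) (t : Token α) : ℕ :=
  if h : ∃ j, IsCanonicalRuleIdx D t j then h.choose else 0

/-- Predecessor `pre(t)`: first token of the two-token stage `φ_{j-1}(t)`. -/
noncomputable def pre (D : Dict α) (t : Token α) : Token α :=
  (phiK D (canonIdx D t) t).headD []

/-- Successor `suc(t)`: second token of the two-token stage `φ_{j-1}(t)`. -/
noncomputable def suc (D : Dict α) (t : Token α) : Token α :=
  (phiK D (canonIdx D t) t).getLastD []

/-- `InPath D x a` means `a ∈ P(x)`: `a` is obtained from `x` by iterating `suc`,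
i.e. `a` lies on the ancestor path of `x` in the Successor Forest. -/
def InPath (D : Dict α) (x a : Token α) : Prop :=
  ∃ n : ℕ, (suc D)^[n] x = a

/-- `s` with the suffix `u` removed. -/
def dropSuffix (s u : List α) : List α := s.take (s.length - u.length)

/-- The Prefix Last-Token Condition of the canonical suffix token `t`
with respect to the string `s`. Atomic tokens satisfy it by definition;
a non-atomic token must satisfy Reachability and Priority dominance. -/
def PLTC (D : Dict α) (s t : Token α) : Prop :=
  t.length = 1 ∨
    (1 < t.length ∧
      InPath D (theta D (dropSuffix s (suc D t))) (pre D t) ∧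
      (theta D (dropSuffix s (suc D t)) ≠ pre D t →
        ∀ u : Token α, 1 < u.length → IsCanonical D u → suc D u = pre D t →
          InPath D (theta D (dropSuffix s (suc D t))) u →
          canonIdx D t < canonIdx D u))


theorem applyRule_flatten (r : Rule α) (L : List (Token α)) :
    (applyRule r L).flatten = L.flatten := by
  fun_induction applyRule r L with
  | case1 => rfl
  | case2 => rfl
  | case3 t u rest h ih => simp [ih, h.1, h.2]
  | case4 t u rest h ih => simp_all

theorem applyRule_length_le (r : Rule α) (L : List (Token α)) :
    (applyRule r L).length ≤ L.length := by
  fun_induction applyRule r L with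
  | case1 => simp
  | case2 => simp
  | case3 t u rest h ih => simp; omega
  | case4 t u rest h ih => simp_all

theorem applyRule_split (r : Rule α) (L : List (Token α)) :
    ∀ A B, applyRule r L = A ++ B →
      ∃ A' B', L = A' ++ B' ∧ applyRule r A' = A ∧ applyRule r B' = B := by
  fun_induction applyRule r L with
  | case1 =>
    intro A B h
    refine ⟨[], [], rfl, ?_⟩
    have := h.symm
    simp only [List.append_eq_nil_iff] at this
    simp [this, applyRule]
  | case2 t =>
    intro A B h
    cases A with
    | nil => exact ⟨[], [t], rfl, by simp [applyRule], by simpa [applyRule] using h⟩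
    | cons a A =>
      simp at h
      obtain ⟨rfl, rfl, rfl⟩ := h
      exact ⟨[t], [], rfl, by simp [applyRule], by simp [applyRule]⟩
  | case3 t u rest hc ih =>
    intro A B h
    cases A with
    | nil =>
      refine ⟨[], t :: u :: rest, rfl, by simp [applyRule], ?_⟩
      rw [applyRule, if_pos hc]; simpa using h
    | cons a A =>
      simp at h
      obtain ⟨rfl, h⟩ := h
      obtain ⟨A', B', rfl, h1, h2⟩ := ih A B h
      refine ⟨t :: u :: A', B', rfl, ?_, h2⟩
      rw [applyRule, if_pos hc, h1]
  | case4 t u rest hc ih =>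
    intro A B h
    cases A with
    | nil =>
      refine ⟨[], t :: u :: rest, rfl, by simp [applyRule], ?_⟩
      rw [applyRule, if_neg hc]; simpa using h
    | cons a A =>
      simp at h
      obtain ⟨rfl, h⟩ := h
      obtain ⟨A', B', h0, h1, h2⟩ := ih A B h
      refine ⟨t :: A', B', by simp [h0], ?_, h2⟩
      cases A' with
      | nil => simp [applyRule] at h1 ⊢; exact h1
      | cons c A' =>
        simp at h0
        obtain ⟨rfl, _⟩ := h0
        rw [applyRule, if_neg hc, h1]

theorem applyRule_ne_nil (r : Rule α) (L : List (Token α)) (h : L ≠ []) :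
    applyRule r L ≠ [] := by
  fun_induction applyRule r L <;> simp_all

theorem applyRule_ne_pair (x y : Token α) (hx : x ≠ []) (hy : y ≠ [])
    (B : List (Token α)) : applyRule (x, y) B ≠ [x, y] := by
  intro h
  match B with
  | [] => simp [applyRule] at h
  | [t] => simp [applyRule] at h
  | [t, u] =>
    rw [applyRule] at h
    split_ifs at h with hc
    · simp [applyRule] at h
    · simp [applyRule] at h
      exact hc h
  | t :: u :: c :: rest =>
    rw [applyRule] at h
    split_ifs at h with hc
    · simp [hy] at h
    · rw [applyRule] at h
      split_ifs at h with hc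
      · simp [hx] at h
      · simp at h
        exact applyRule_ne_nil _ _ (by simp) h.2.2

theorem phiK_succ (D : Dict α) (k : ℕ) (hk : k < D.length) (s : List α) :
    phiK D (k + 1) s = applyRule D[k] (phiK D k s) := by
  rw [phiK, phiK, List.take_succ_eq_append_getElem hk, List.foldl_append]; rfl

theorem phiK_succ_ge (D : Dict α) (k : ℕ) (hk : D.length ≤ k) (s : List α) :
    phiK D (k + 1) s = phiK D k s := by
  simp [phiK, List.take_of_length_le hk, List.take_of_length_le (Nat.le_succ_of_le hk)]

theorem phi0_flatten (s : List α) : (phi0 s).flatten = s := by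
  induction s with
  | nil => rfl
  | cons a s ih => simpa [phi0] using ih

theorem phiK_flatten (D : Dict α) (k : ℕ) (s : List α) : (phiK D k s).flatten = s := by
  induction k with
  | zero => exact phi0_flatten s
  | succ k ih =>
    by_cases hk : k < D.length
    · rw [phiK_succ D k hk, applyRule_flatten, ih]
    · rw [phiK_succ_ge D k (by omega), ih]

theorem phiK_length_anti (D : Dict α) (s : List α) :
    Antitone (fun k => (phiK D k s).length) := by
  refine antitone_nat_of_succ_le fun k => ?_
  by_cases hk : k < D.length
  · simp only [phiK_succ D k hk]; exact applyRule_length_le _ _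
  · simp only [phiK_succ_ge D k (by omega)]; exact le_rfl

theorem phiK_single (D : Dict α) (x : List α) (j k : ℕ) (hjk : j ≤ k)
    (h : phiK D j x = [x]) : phiK D k x = [x] := by
  induction k, hjk using Nat.le_induction with
  | base => exact h
  | succ k _ ih =>
    by_cases hk : k < D.length
    · rw [phiK_succ D k hk, ih, applyRule]
    · rw [phiK_succ_ge D k (by omega), ih]

theorem phiK_cut (D : Dict α) (k : ℕ) : ∀ (s : List α) (A B : List (Token α)),
    phiK D k s = A ++ B →
      phiK D k A.flatten = A ∧ phiK D k B.flatten = B ∧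
      ∀ i ≤ k, phiK D i s = phiK D i A.flatten ++ phiK D i B.flatten := by
  induction k with
  | zero =>
    intro s A B h
    have h' : phi0 s = A ++ B := h
    obtain ⟨a, b, rfl, ha, hb⟩ := List.map_eq_append_iff.1 h'
    have ha' : phi0 a = A := ha
    have hb' : phi0 b = B := hb
    subst ha' hb'
    rw [phi0_flatten, phi0_flatten]
    refine ⟨rfl, rfl, fun i hi => ?_⟩
    obtain rfl : i = 0 := by omega
    exact h
  | succ k ih =>
    intro s A B h
    by_cases hk : k < D.length
    · have h0 := h
      rw [phiK_succ D k hk] at h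
      obtain ⟨A', B', h1, rfl, rfl⟩ := applyRule_split _ _ _ _ h
      obtain ⟨e1, e2, e3⟩ := ih s A' B' h1
      simp only [applyRule_flatten]
      have f1 : phiK D (k + 1) A'.flatten = applyRule D[k] A' := by
        rw [phiK_succ D k hk, e1]
      have f2 : phiK D (k + 1) B'.flatten = applyRule D[k] B' := by
        rw [phiK_succ D k hk, e2]
      refine ⟨f1, f2, fun i hi => ?_⟩
      rcases Nat.lt_or_ge k i with hi' | hi'
      · obtain rfl : i = k + 1 := by omega
        rw [h0, f1, f2]
      · exact e3 i hi'
    · have hs : ∀ s, phiK D (k + 1) s = phiK D k s := phiK_succ_ge D k (by omega)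
      rw [hs] at h
      obtain ⟨e1, e2, e3⟩ := ih s A B h
      refine ⟨by rw [hs, e1], by rw [hs, e2], fun i hi => ?_⟩
      rcases Nat.lt_or_ge k i with hi' | hi'
      · obtain rfl : i = k + 1 := by omega
        rw [hs, hs, hs, h, e1, e2]
      · exact e3 i hi'

theorem applyRule_eq_single (r : Rule α) (L : List (Token α)) (t : Token α)
    (h : applyRule r L = [t]) : L = [t] ∨ L = [r.1, r.2] := by
  match L with
  | [] => simp [applyRule] at h
  | [u] => left; simpa [applyRule] using h
  | a :: b :: rest =>
    rw [applyRule] at h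
    split_ifs at h with hc
    · right
      simp at h
      by_cases hr : rest = []
      · simp [hr, hc]
      · exact absurd h.2 (applyRule_ne_nil _ _ hr)
    · simp at h
      exact absurd h.2 (applyRule_ne_nil _ _ (by simp))

theorem exists_canonIdx (D : Dict α) (t : Token α) (hl : 1 < t.length)
    (hc : IsCanonical D t) : ∃ j, IsCanonicalRuleIdx D t j := by
  classical
  have hex : ∃ k, phiK D k t = [t] := ⟨D.length, hc⟩
  have hspec := Nat.find_spec hex
  have hle : Nat.find hex ≤ D.length := Nat.find_min' hex hc
  have hmin := fun m => Nat.find_min hex (m := m)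
  generalize Nat.find hex = k at *
  cases k with
  | zero =>
    have := congrArg List.length hspec
    simp [phiK, phi0] at this
    omega
  | succ j =>
    refine ⟨j, by omega, ?_, hspec⟩
    have h2 := hspec
    rw [phiK_succ D j (by omega)] at h2
    rcases applyRule_eq_single _ _ _ h2 with h3 | h3
    · exact absurd h3 (hmin j (by omega))
    · simp [h3]

theorem canonIdx_spec (D : Dict α) (t : Token α) (hl : 1 < t.length)
    (hc : IsCanonical D t) : IsCanonicalRuleIdx D t (canonIdx D t) := by
  have h := exists_canonIdx D t hl hc
  rw [canonIdx, dif_pos h]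
  exact h.choose_spec

/-- Main facts about the canonical rule. -/
theorem canon_facts (D : Dict α) (t : Token α) (hl : 1 < t.length)
    (hc : IsCanonical D t) : ∃ h : canonIdx D t < D.length,
      D[canonIdx D t] = (pre D t, suc D t) ∧
      phiK D (canonIdx D t) (pre D t) = [pre D t] ∧
      phiK D (canonIdx D t) (suc D t) = [suc D t] ∧
      t = pre D t ++ suc D t ∧
      ∀ i ≤ canonIdx D t, phiK D i t = phiK D i (pre D t) ++ phiK D i (suc D t) := by
  obtain ⟨h1, h2, h3⟩ := canonIdx_spec D t hl hc
  refine ⟨h1, ?_⟩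
  have h4 := h3
  rw [phiK_succ D _ h1] at h4
  rcases applyRule_eq_single _ _ _ h4 with h5 | h5
  · simp [h5] at h2
  · have hp : pre D t = D[canonIdx D t].1 := by simp [pre, h5]
    have hs : suc D t = D[canonIdx D t].2 := by simp [suc, h5]
    rw [← hp, ← hs] at h5
    have hcut := phiK_cut D _ t [pre D t] [suc D t] h5
    simp only [List.flatten_singleton] at hcut
    refine ⟨by rw [hp, hs], hcut.1, hcut.2.1, ?_, hcut.2.2⟩
    have := phiK_flatten D (canonIdx D t) t
    rw [h5] at this
    simpa using this.symm

theorem suc_atomic (D : Dict α) (t : Token α) (hl : t.length ≤ 1) : suc D t = t := by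
  match t, hl with
  | [], _ =>
    have h := phiK_length_anti D ([] : List α) (Nat.zero_le (canonIdx D []))
    have h0 : (phiK D (canonIdx D []) ([] : List α)) = [] := by
      apply List.eq_nil_of_length_eq_zero
      simpa [phiK, phi0] using h
    simp [suc, h0]
  | [a], _ =>
    have : phiK D (canonIdx D [a]) [a] = [[a]] :=
      phiK_single D [a] 0 _ (Nat.zero_le _) rfl
    simp [suc, this]

theorem canon_suc (D : Dict α) (t : Token α) (hc : IsCanonical D t) :
    IsCanonical D (suc D t) := by
  rcases Nat.lt_or_ge 1 t.length with hl | hl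
  · obtain ⟨h1, -, -, h2, -⟩ := canon_facts D t hl hc
    exact phiK_single D _ _ _ h1.le h2
  · rw [suc_atomic D t hl]; exact hc

theorem canonIdx_suc_lt (D : Dict α) (t : Token α) (hc : IsCanonical D t)
    (hl : 1 < t.length) (hl' : 1 < (suc D t).length) :
    canonIdx D (suc D t) < canonIdx D t := by
  obtain ⟨h1, -, -, h2, -⟩ := canon_facts D t hl hc
  obtain ⟨-, h3, -⟩ := canonIdx_spec D (suc D t) hl' (canon_suc D t hc)
  by_contra hlt
  have := phiK_single D _ _ _ (not_lt.1 hlt) h2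
  simp [this] at h3

theorem path_facts (D : Dict α) (z : Token α) (hz : IsCanonical D z) (n : ℕ) :
    IsCanonical D ((suc D)^[n] z) ∧ (1 < ((suc D)^[n] z).length →
      ∀ i ≤ canonIdx D ((suc D)^[n] z), ∃ L, phiK D i z = L ++ phiK D i ((suc D)^[n] z)) := by
  induction n with
  | zero => exact ⟨hz, fun _ i _ => ⟨[], rfl⟩⟩
  | succ n ih =>
    rw [Function.iterate_succ_apply']
    generalize (suc D)^[n] z = v at *
    obtain ⟨hv, ih⟩ := ih
    refine ⟨canon_suc D v hv, fun hl i hi => ?_⟩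
    rcases Nat.lt_or_ge 1 v.length with hvl | hvl
    · have hlt := canonIdx_suc_lt D v hv hvl hl
      obtain ⟨L, hL⟩ := ih hvl i (by omega)
      obtain ⟨-, -, -, -, -, h⟩ := canon_facts D v hvl hv
      exact ⟨L ++ phiK D i (pre D v), by rw [hL, h i (by omega), List.append_assoc]⟩
    · rw [suc_atomic D v hvl] at hl; omega

theorem tokenize_last (D : Dict α) (s : List α) (hs : s ≠ []) :
    ∃ p, s = p ++ theta D s ∧ IsCanonical D (theta D s) ∧
      ∀ i ≤ D.length, phiK D i s = phiK D i p ++ phiK D i (theta D s) := by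
  have hne : tokenize D s ≠ [] := by
    intro h
    have := phiK_flatten D D.length s
    rw [← tokenize, h] at this
    exact hs this.symm
  have ht : tokenize D s = (tokenize D s).dropLast ++ [theta D s] := by
    conv_lhs => rw [← List.dropLast_append_getLast hne]
    rw [theta, List.getLastD_eq_getLast?, List.getLast?_eq_getLast_of_ne_nil hne]
    rfl
  obtain ⟨h1, h2, h3⟩ := phiK_cut D D.length s _ _ ht
  simp only [List.flatten_singleton] at h2 h3
  refine ⟨_, ?_, h2, h3⟩
  have := phiK_flatten D D.length s
  rw [← tokenize, ht] at this
  simpa using this.symm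

/-- **Maximality of the last token.** No non-atomic canonical suffix token `w` of `s`
with `suc w = θ(s)` (i.e., no child of the answer node `θ(s)`) satisfies the
Prefix Last-Token Condition with respect to `s`. -/
theorem last_token_maximal [Fintype α] (D : Dict α) (hD : ValidDict D)
    (s : List α) (hs : s ≠ [])
    (w : Token α) (hwl : 1 < w.length) (hwc : IsCanonical D w) (hws : w <:+ s)
    (hsuc : suc D w = theta D s) :
    ¬ PLTC D s w := by
  rintro (h | ⟨-, ⟨n, hn⟩, hprio⟩)
  · omega
  obtain ⟨hj, hr, hx, hy, hw, -⟩ := canon_facts D w hwl hwc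
  obtain ⟨hx0, hy0⟩ := hD _ (List.getElem_mem hj)
  rw [hr] at hx0 hy0
  simp only at hx0 hy0
  obtain ⟨p, hp, -, hsp⟩ := tokenize_last D s hs
  rw [← hsuc] at hp hsp
  have hdrop : dropSuffix s (suc D w) = p := by
    rw [dropSuffix, hp]; simp
  rw [hdrop] at hn hprio
  have hp0 : p ≠ [] := by
    rintro rfl
    have h1 := hws.length_le
    have h2 := congrArg List.length hw
    have h3 := congrArg List.length hp
    have h4 := List.length_pos_of_ne_nil hx0
    simp at h2 h3
    omega
  obtain ⟨q, -, hzc, hpq⟩ := tokenize_last D p hp0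
  generalize theta D p = z at *
  -- `φ_{j+1}(z)` ends with `pre w`
  have key : ∃ L, phiK D (canonIdx D w + 1) z = L ++ [pre D w] := by
    have hx' : phiK D (canonIdx D w + 1) (pre D w) = [pre D w] :=
      phiK_single D _ _ _ (Nat.le_succ _) hx
    by_cases hzx : z = pre D w
    · exact ⟨[], by rw [hzx, hx']; rfl⟩
    · classical
      have hex : ∃ n, (suc D)^[n] z = pre D w := ⟨n, hn⟩
      have hspec := Nat.find_spec hex
      have hmin := fun m => Nat.find_min hex (m := m)
      generalize Nat.find hex = N at *
      cases N with
      | zero => exact absurd hspec hzx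
      | succ m =>
        have hm := hmin m (Nat.lt_succ_self m)
        rw [Function.iterate_succ_apply'] at hspec
        have hul : 1 < ((suc D)^[m] z).length := by
          by_contra hle
          rw [suc_atomic D _ (not_lt.1 hle)] at hspec
          exact hm hspec
        obtain ⟨huc, hup⟩ := path_facts D z hzc m
        have hlt := hprio hzx _ hul huc hspec ⟨m, rfl⟩
        obtain ⟨L, hL⟩ := hup hul (canonIdx D w + 1) hlt
        obtain ⟨-, -, -, -, -, h⟩ := canon_facts D _ hul huc
        have h' := h (canonIdx D w + 1) hlt
        rw [hspec, hx'] at h'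
        exact ⟨L ++ phiK D (canonIdx D w + 1) (pre D ((suc D)^[m] z)),
          by rw [hL, h', List.append_assoc]⟩
  obtain ⟨L, hL⟩ := key
  have hy' : phiK D (canonIdx D w + 1) (suc D w) = [suc D w] :=
    phiK_single D _ _ _ (Nat.le_succ _) hy
  have hfin := hsp (canonIdx D w + 1) hj
  rw [hpq _ hj, hL, hy', phiK_succ D _ hj, hr] at hfin
  have hfin' : applyRule (pre D w, suc D w) (phiK D (canonIdx D w) s) =
      (phiK D (canonIdx D w + 1) q ++ L) ++ [pre D w, suc D w] := by
    rw [hfin]; simp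
  obtain ⟨A', B', -, -, hB⟩ := applyRule_split _ _ _ _ hfin'
  exact applyRule_ne_pair _ _ hx0 hy0 B' hB

end BPE
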